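/- Let a ∈ M_n(ℚ̄F_∞), regarded as an element of M_n(ℂF_∞) via the inclusion ℚ̄ ⊂ ℂ. Then the map φ ↦ dim_φ(ker a) is continuous on the set of traces φ on F_∞ with φ(1) = 1 satisfying Lück's condition, equipped with the topology of pointwise convergence on F_∞. -/

import Mathlib

open scoped ComplexOrder ENNReal
open Filter Topology Matrix

set_option synthInstance.maxHeartbeats 1000000
set_option maxHeartbeats 1000000

noncomputable section

instance piLpCompleteSpace {ι : Type*} [Fintype ι] (p : ℝ≥0∞) (β : ι → Type*)
    [∀ i, UniformSpace (β i)] [∀ i, CompleteSpace (β i)] : CompleteSpace (PiLp p β) :=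
  PiLp.completeSpace p β

/-- `φ : G → ℂ` is of positive type: for every finite family `g₁, …, g_m` of elements of
`G`, the matrix `(φ (gᵢ⁻¹ gⱼ))_{i,j}` is positive semidefinite. -/
def IsPosType {G : Type*} [Group G] (φ : G → ℂ) : Prop :=
  ∀ (m : ℕ) (g : Fin m → G), (Matrix.of fun i j => φ ((g i)⁻¹ * g j)).PosSemidef

/-- A trace on a (discrete) group: a function of positive type, constant on conjugacy
classes. -/
def IsGroupTrace {G : Type*} [Group G] (φ : G → ℂ) : Prop :=
  IsPosType φ ∧ ∀ g h : G, φ (h * g * h⁻¹) = φ g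

/-- GNS representation data for a function `φ` on a group `G`: a Hilbert space `H`, a
unital algebra morphism `π` from `ℂG = MonoidAlgebra ℂ G` to the bounded operators on `H`
sending group elements to unitaries (this is the condition `star_of`), and a cyclic vector
`ξ` whose matrix coefficient is (the linear extension of) `φ`. -/
structure GNSRep (G : Type*) [Group G] (φ : G → ℂ) where
  H : Type
  [instNormed : NormedAddCommGroup H]
  [instInner : InnerProductSpace ℂ H]
  [instComplete : CompleteSpace H]
  π : MonoidAlgebra ℂ G →ₐ[ℂ] (H →L[ℂ] H)
  ξ : H
  star_of : ∀ g : G, star (π (MonoidAlgebra.of ℂ G g)) = π (MonoidAlgebra.of ℂ G g⁻¹)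
  inner_eq : ∀ g : G, (inner ℂ ξ (π (MonoidAlgebra.of ℂ G g) ξ) : ℂ) = φ g
  cyclic : Dense (Set.range fun x : MonoidAlgebra ℂ G => π x ξ)

attribute [instance] GNSRep.instNormed GNSRep.instInner GNSRep.instComplete

/-- The vector `ξᵢ ∈ Hⁿ`: the cyclic vector `ξ` in the `i`-th summand, `0` elsewhere. -/
def GNSRep.vec {G : Type*} [Group G] {φ : G → ℂ} (R : GNSRep G φ) {n : ℕ} (i : Fin n) :
    PiLp 2 (fun _ : Fin n => R.H) :=
  (PiLp.continuousLinearEquiv 2 ℂ (fun _ : Fin n => R.H)).symm (Pi.single i R.ξ)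

/-- `|x| = (x* x)^{1/2}`, via the continuous functional calculus. -/
def cfcAbs {A : Type*} [CStarAlgebra A] (x : A) : A := cfc Real.sqrt (star x * x)

/-- The set of continuous majorants of `ln₊` on `[0,∞)`.  (Recall that `Real.log 0 = 0`,
so that `Real.log` agrees with `ln₊` on `[0,∞)`.) -/
def lnPlusMajorants : Set (ℝ → ℝ) :=
  {g | ContinuousOn g (Set.Ici 0) ∧ ∀ t ∈ Set.Ici (0:ℝ), Real.log t ≤ g t}

/-- The action of a matrix `a ∈ Mₙ(R)` on the Hilbert space `H'ⁿ` (with its `ℓ²` inner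
product) induced by a morphism `π : R → B(H')`: `(π_n(a) v)_i = Σ_j π(a i j) (v j)`. -/
def matAct {R H' : Type*} [Ring R] [Algebra ℂ R] [NormedAddCommGroup H']
    [InnerProductSpace ℂ H'] {n : ℕ}
    (π : R →ₐ[ℂ] (H' →L[ℂ] H')) (a : Matrix (Fin n) (Fin n) R) :
    PiLp 2 (fun _ : Fin n => H') →L[ℂ] PiLp 2 (fun _ : Fin n => H') :=
  (PiLp.continuousLinearEquiv 2 ℂ _).symm.toContinuousLinearMap ∘L
    (ContinuousLinearMap.pi fun i => ∑ j, (π (a i j)).comp (ContinuousLinearMap.proj j)) ∘L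
    (PiLp.continuousLinearEquiv 2 ℂ _).toContinuousLinearMap

/-- `(φ ⊗ Trₙ)(ln₊ |a|) := inf { Σᵢ ⟨ξᵢ, g(|π(a)|) ξᵢ⟩ : g : [0,∞) → ℝ continuous, g ≥ ln₊ }`,
an element of `ℝ ∪ {−∞}`, computed in the GNS representation `R`. -/
def GNSRep.lnPlusQ {G : Type*} [Group G] {φ : G → ℂ} (R : GNSRep G φ) {n : ℕ}
    (a : Matrix (Fin n) (Fin n) (MonoidAlgebra ℂ G)) : EReal :=
  ⨅ g ∈ lnPlusMajorants,
    ((∑ i, (inner ℂ (R.vec i) (cfc g (cfcAbs (matAct R.π a)) (R.vec i)) : ℂ)).re : EReal)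

/-- A function `φ` on `G` satisfies Lück's condition if `(φ ⊗ Trₙ)(ln₊|a|) ≥ 0` for every
`n ≥ 1` and every `a ∈ Mₙ(ℤG)` (an `a ∈ Mₙ(ℂG)` whose coefficients are all integers),
where the quantity is computed in any GNS representation of `φ`. -/
def SatisfiesLueck {G : Type*} [Group G] (φ : G → ℂ) : Prop :=
  ∀ (n : ℕ), 0 < n → ∀ a : Matrix (Fin n) (Fin n) (MonoidAlgebra ℂ G),
    (∀ (i j : Fin n) (g : G), ∃ m : ℤ, (a i j).coeff g = (m : ℂ)) →
    ∀ R : GNSRep G φ, 0 ≤ R.lnPlusQ a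

/-- `dim_φ(ker a) := inf { Σᵢ ⟨ξᵢ, h(|π(a)|) ξᵢ⟩ : h : [0,∞) → [0,1] continuous, h 0 = 1 }`,
the von Neumann dimension of the kernel of `a`, computed in the GNS representation `R`. -/
def GNSRep.kerDim {G : Type*} [Group G] {φ : G → ℂ} (R : GNSRep G φ) {n : ℕ}
    (a : Matrix (Fin n) (Fin n) (MonoidAlgebra ℂ G)) : ℝ :=
  sInf {r : ℝ | ∃ h : ℝ → ℝ, ContinuousOn h (Set.Ici 0) ∧
    (∀ t ∈ Set.Ici (0:ℝ), h t ∈ Set.Icc (0:ℝ) 1) ∧ h 0 = 1 ∧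
    r = (∑ i, (inner ℂ (R.vec i) (cfc h (cfcAbs (matAct R.π a)) (R.vec i)) : ℂ)).re}

/-!
The dimension of the kernel of `a` is an infimum of integrals of test functions against the spectral
measure of `a* a`. The spectrum of `a* a` is bounded uniformly in `φ`, so by Weierstrass each test
function may be replaced by a polynomial majorant, whose integral is a combination of the moments
`φ ⊗ Tr ((a* a)ᵏ)`; hence `φ ↦ dim_φ (ker a)` is upper semicontinuous for every `a`. When `a` is
integral, Lück's condition bounds `-∫ ln (max s e⁻ᶜ)` by `c * dim_φ (ker a)`, while conversely
`c * dim_φ (ker a)` is at most `-∫ ln (max s e⁻ᶜ)` plus a constant independent of `c`; as `c → ∞`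
this makes `φ ↦ dim_φ (ker a)` lower semicontinuous too.

A matrix with algebraic coefficients is a multiple of a matrix over the ring of integers of a number
field `K`. Its restriction of scalars to `ℤ` is integral, and over `ℂ` it is conjugate to the direct
sum of the conjugates of `a` under the embeddings of `K`. Hence the sum of the dimensions of the
kernels of the conjugates is continuous; as every summand is upper semicontinuous, every summand is
continuous, in particular the one belonging to the given embedding.
-/

section StarRing

variable {R G : Type*} [Semiring R] [StarRing R] [Group G]

/-- The involution `∑ c_g g ↦ ∑ c_g* g⁻¹` of the group algebra. -/
instance groupAlgebraStar : Star (MonoidAlgebra R G) :=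
  ⟨fun x => (x.map (starAddEquiv (R := R)).toAddMonoidHom).mapDomain (·⁻¹)⟩

lemma groupAlgebra_star_single (g : G) (c : R) :
    star (MonoidAlgebra.single g c) = MonoidAlgebra.single g⁻¹ (star c) := by
  simp [star]

lemma groupAlgebra_star_add (x y : MonoidAlgebra R G) : star (x + y) = star x + star y := by
  simp only [star, MonoidAlgebra.map_add, MonoidAlgebra.mapDomain_add]

instance groupAlgebraStarRing : StarRing (MonoidAlgebra R G) where
  star_involutive x := by
    induction x using MonoidAlgebra.induction_linear with
    | zero => simp [star]
    | add x y hx hy => rw [groupAlgebra_star_add, groupAlgebra_star_add, hx, hy]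
    | single g c => simp only [groupAlgebra_star_single, inv_inv, star_star]
  star_mul x y := by
    induction x using MonoidAlgebra.induction_linear with
    | zero => simp [star]
    | add x z hx hz => simp only [add_mul, mul_add, groupAlgebra_star_add, hx, hz]
    | single g c =>
      induction y using MonoidAlgebra.induction_linear with
      | zero => simp [star]
      | add x z hx hz => simp only [add_mul, mul_add, groupAlgebra_star_add, hx, hz]
      | single h d =>
        simp only [groupAlgebra_star_single, MonoidAlgebra.single_mul_single, star_mul,
          _root_.mul_inv_rev]
  star_add := groupAlgebra_star_add

end StarRing

lemma groupAlgebra_star_smul {R G : Type*} [CommSemiring R] [StarRing R] [Group G] (c : R)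
    (x : MonoidAlgebra R G) : star (c • x) = star c • star x := by
  induction x using MonoidAlgebra.induction_linear with
  | zero => simp
  | add x y hx hy => simp only [smul_add, star_add, hx, hy]
  | single g d => simp [groupAlgebra_star_single]

section LinearExtension

/-- The linear extension to `ℂG` of a function `φ` on `G`. -/
def linExt {G : Type*} (φ : G → ℂ) : MonoidAlgebra ℂ G →ₗ[ℂ] ℂ :=
  Finsupp.linearCombination ℂ φ ∘ₗ (MonoidAlgebra.coeffLinearEquiv ℂ).toLinearMap

@[simp]
lemma linExt_single {G : Type*} (φ : G → ℂ) (g : G) (c : ℂ) :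
    linExt φ (MonoidAlgebra.single g c) = c * φ g := by
  simp [linExt, MonoidAlgebra.coeffLinearEquiv]

lemma continuous_linExt {G : Type*} (x : MonoidAlgebra ℂ G) :
    Continuous fun φ : G → ℂ => linExt φ x := by
  induction x using MonoidAlgebra.induction_linear with
  | zero => simpa using continuous_const
  | add x y hx hy => simp only [map_add]; fun_prop
  | single g c => simp only [linExt_single]; fun_prop

variable {G : Type*} [Group G] {φ : G → ℂ}

lemma IsGroupTrace.map_mul_comm (hφ : IsGroupTrace φ) (g h : G) : φ (g * h) = φ (h * g) := by
  simpa [mul_assoc] using (hφ.2 (g * h) h).symm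

lemma IsGroupTrace.linExt_mul_comm (hφ : IsGroupTrace φ) (x y : MonoidAlgebra ℂ G) :
    linExt φ (x * y) = linExt φ (y * x) := by
  induction x using MonoidAlgebra.induction_linear with
  | zero => simp
  | add x z hx hz => simp [add_mul, mul_add, hx, hz]
  | single g c =>
    induction y using MonoidAlgebra.induction_linear with
    | zero => simp
    | add x z hx hz => simp [add_mul, mul_add, hx, hz]
    | single h d => simp [MonoidAlgebra.single_mul_single, mul_comm d, hφ.map_mul_comm h]

lemma IsGroupTrace.linExt_trace_mul_comm (hφ : IsGroupTrace φ) {ι κ : Type*} [Fintype ι]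
    [Fintype κ] (x : Matrix ι κ (MonoidAlgebra ℂ G)) (y : Matrix κ ι (MonoidAlgebra ℂ G)) :
    linExt φ (x * y).trace = linExt φ (y * x).trace := by
  simp only [Matrix.trace, Matrix.diag, Matrix.mul_apply, map_sum]
  rw [Finset.sum_comm]
  simp_rw [hφ.linExt_mul_comm (x _ _)]

lemma IsGroupTrace.linExt_trace_mul_pow_comm (hφ : IsGroupTrace φ) {ι : Type*} [Fintype ι]
    [DecidableEq ι] (x y : Matrix ι ι (MonoidAlgebra ℂ G)) (k : ℕ) :
    linExt φ ((x * y) ^ k).trace = linExt φ ((y * x) ^ k).trace := by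
  cases k with
  | zero => simp only [pow_zero]
  | succ k =>
    have h : (x * y) ^ (k + 1) = x * ((y * x) ^ k * y) := by
      rw [← mul_assoc, ← mul_pow_mul, pow_succ, mul_assoc]
    rw [h, hφ.linExt_trace_mul_comm, mul_assoc, pow_succ]

end LinearExtension

section GNSConstruction

open UniformSpace (Completion)

variable {G : Type*} [Group G] {φ : G → ℂ}

namespace IsPosType

lemma map_inv (h : IsPosType φ) (g : G) : φ g⁻¹ = star (φ g) := by
  simpa using ((h 2 ![g, 1]).1.apply 0 1).symm

lemma linExt_star (h : IsPosType φ) (x : MonoidAlgebra ℂ G) :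
    linExt φ (star x) = star (linExt φ x) := by
  induction x using MonoidAlgebra.induction_linear with
  | zero => simp
  | add x z hx hz => simp only [star_add, map_add, hx, hz]
  | single g d => simp [groupAlgebra_star_single, h.map_inv]

lemma linExt_star_mul_self_nonneg (h : IsPosType φ) (x : MonoidAlgebra ℂ G) :
    0 ≤ linExt φ (star x * x) := by
  set e := x.coeff.support.equivFin.symm
  have hx : x = ∑ i, MonoidAlgebra.single (e i : G) (x.coeff (e i)) := by
    conv_lhs => rw [← MonoidAlgebra.sum_coeff_single x, Finsupp.sum, ← Finset.sum_coe_sort]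
    exact (Equiv.sum_comp e _).symm
  convert (h _ fun i => (e i : G)).dotProduct_mulVec_nonneg fun i => x.coeff (e i)
  conv_lhs => rw [hx]
  simp only [star_sum, groupAlgebra_star_single, Finset.sum_mul, Finset.mul_sum, map_sum,
    linExt_single, MonoidAlgebra.single_mul_single, dotProduct, Matrix.mulVec, Matrix.of_apply,
    Pi.star_apply]
  rw [Finset.sum_comm]
  exact Finset.sum_congr rfl fun i _ => Finset.sum_congr rfl fun j _ => by ring

/-- The pre-Hilbert space underlying the GNS construction for `φ`: a type synonym of `ℂG`, with the
sesquilinear form `⟨x, y⟩ = φ(x* y)`. -/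
def PreGNS (_ : IsPosType φ) : Type _ := MonoidAlgebra ℂ G

variable (h : IsPosType φ)

instance : AddCommGroup h.PreGNS := inferInstanceAs (AddCommGroup (MonoidAlgebra ℂ G))
instance : Module ℂ h.PreGNS := inferInstanceAs (Module ℂ (MonoidAlgebra ℂ G))

/-- The identification of `ℂG` with its type synonym `h.PreGNS`. -/
def toPreGNS : MonoidAlgebra ℂ G ≃ₗ[ℂ] h.PreGNS := LinearEquiv.refl ℂ _

/-- The inner product structure of `h.PreGNS`. -/
abbrev preGNSCore : PreInnerProductSpace.Core ℂ h.PreGNS where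
  inner x y := linExt φ (star (h.toPreGNS.symm x) * h.toPreGNS.symm y)
  conj_inner_symm x y := by
    rw [starRingEnd_apply, ← h.linExt_star, star_mul, star_star]
  re_inner_nonneg x := (RCLike.nonneg_iff.mp (h.linExt_star_mul_self_nonneg _)).1
  add_left x y z := by simp [add_mul]
  smul_left x y r := by simp [groupAlgebra_star_smul]

instance : SeminormedAddCommGroup h.PreGNS :=
  InnerProductSpace.Core.toSeminormedAddCommGroup (c := h.preGNSCore)
instance : InnerProductSpace ℂ h.PreGNS := InnerProductSpace.ofCore h.preGNSCore

lemma inner_toPreGNS (x y : MonoidAlgebra ℂ G) :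
    inner ℂ (h.toPreGNS x) (h.toPreGNS y) = linExt φ (star x * y) := rfl

/-- Left translation by `g` on `h.PreGNS`. -/
def translate (g : G) : h.PreGNS →ₗᵢ[ℂ] h.PreGNS :=
  (h.toPreGNS.toLinearMap ∘ₗ LinearMap.mulLeft ℂ (MonoidAlgebra.of ℂ G g) ∘ₗ
    h.toPreGNS.symm.toLinearMap).isometryOfInner fun x y => by
      obtain ⟨x, rfl⟩ := h.toPreGNS.surjective x
      obtain ⟨y, rfl⟩ := h.toPreGNS.surjective y
      simp [inner_toPreGNS, groupAlgebra_star_single, mul_assoc,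
        ← mul_assoc (MonoidAlgebra.single g⁻¹ _), MonoidAlgebra.single_mul_single,
        ← MonoidAlgebra.one_def]

@[simp]
lemma translate_toPreGNS (g : G) (x : MonoidAlgebra ℂ G) :
    h.translate g (h.toPreGNS x) = h.toPreGNS (MonoidAlgebra.of ℂ G g * x) := rfl

lemma inner_translate_inv (g : G) (x y : h.PreGNS) :
    inner ℂ (h.translate g⁻¹ x) y = inner ℂ x (h.translate g y) := by
  obtain ⟨x, rfl⟩ := h.toPreGNS.surjective x
  obtain ⟨y, rfl⟩ := h.toPreGNS.surjective y
  simp [inner_toPreGNS, groupAlgebra_star_single, mul_assoc]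

/-- Left translation on the Hilbert space completion of `h.PreGNS`, as a representation of `G`. -/
def translateHom : G →* (Completion h.PreGNS →L[ℂ] Completion h.PreGNS) where
  toFun g := (h.translate g).toContinuousLinearMap.completion
  map_one' := by
    ext x
    induction x using Completion.induction_on with
    | hp => apply isClosed_eq <;> fun_prop
    | ih x =>
      obtain ⟨x, rfl⟩ := h.toPreGNS.surjective x
      simp [← MonoidAlgebra.one_def]
  map_mul' g k := by
    ext x
    induction x using Completion.induction_on with
    | hp => apply isClosed_eq <;> fun_prop
    | ih x =>
      obtain ⟨x, rfl⟩ := h.toPreGNS.surjective x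
      simp [← mul_assoc, MonoidAlgebra.single_mul_single]

@[simp]
lemma translateHom_coe (g : G) (x : h.PreGNS) :
    h.translateHom g (x : Completion h.PreGNS) = (h.translate g x : h.PreGNS) := by
  simp [translateHom]

lemma star_translateHom (g : G) : star (h.translateHom g) = h.translateHom g⁻¹ := by
  symm
  rw [ContinuousLinearMap.star_eq_adjoint, ContinuousLinearMap.eq_adjoint_iff]
  intro x y
  induction x, y using Completion.induction_on₂ with
  | hp => apply isClosed_eq <;> fun_prop
  | ih x y => simp [h.inner_translate_inv]

lemma lift_translateHom_toPreGNS (x y : MonoidAlgebra ℂ G) :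
    MonoidAlgebra.lift ℂ _ G h.translateHom x (h.toPreGNS y : Completion h.PreGNS) =
      (h.toPreGNS (x * y) : h.PreGNS) := by
  induction x using MonoidAlgebra.induction_linear with
  | zero => simp [Completion.coe_zero]
  | add x z hx hz => simp [add_mul, hx, hz, Completion.coe_add]
  | single g c =>
    rw [MonoidAlgebra.lift_single, _root_.smul_apply, translateHom_coe,
      translate_toPreGNS, ← Completion.coe_smul, ← map_smul, ← smul_mul_assoc,
      MonoidAlgebra.smul_of]

end IsPosType

theorem IsPosType.nonempty_gnsRep {G : Type} [Group G] {φ : G → ℂ} (h : IsPosType φ) :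
    Nonempty (GNSRep G φ) :=
  ⟨{ H := Completion h.PreGNS
     π := MonoidAlgebra.lift ℂ _ G h.translateHom
     ξ := (h.toPreGNS 1 : h.PreGNS)
     star_of g := by simp only [MonoidAlgebra.lift_of, star_translateHom]
     inner_eq g := by
      rw [lift_translateHom_toPreGNS, Completion.inner_coe, inner_toPreGNS]
      simp
     cyclic := by
      simp only [lift_translateHom_toPreGNS, mul_one]
      exact Completion.denseRange_coe.comp h.toPreGNS.surjective.denseRange
        (Completion.continuous_coe _) }⟩

end GNSConstruction

section MatrixAction

variable {R H' : Type*} [Ring R] [Algebra ℂ R] [NormedAddCommGroup H'] [InnerProductSpace ℂ H']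
  {n : ℕ} (π : R →ₐ[ℂ] (H' →L[ℂ] H'))

@[simp]
lemma matAct_apply (a : Matrix (Fin n) (Fin n) R) (v : PiLp 2 fun _ : Fin n => H') (i : Fin n) :
    matAct π a v i = ∑ j, π (a i j) (v j) := by
  simp [matAct]

/-- `matAct` as a morphism of algebras. -/
def matActHom : Matrix (Fin n) (Fin n) R →ₐ[ℂ]
    (PiLp 2 (fun _ : Fin n => H') →L[ℂ] PiLp 2 (fun _ : Fin n => H')) :=
  AlgHom.ofLinearMap
    { toFun := matAct π
      map_add' := fun a b => by ext; simp [Finset.sum_add_distrib]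
      map_smul' := fun c a => by ext; simp [Finset.smul_sum] }
    (by
      ext v i
      have hδ (j : Fin n) : π ((1 : Matrix (Fin n) (Fin n) R) i j) (v j) =
          if i = j then v j else 0 := by
        split_ifs with h <;> simp [Matrix.one_apply, h]
      simp [hδ])
    (fun a b => by
      ext v i
      simp only [LinearMap.coe_mk, AddHom.coe_mk, mul_apply_eq_comp, matAct_apply,
        Matrix.mul_apply, map_sum, map_mul, _root_.sum_apply]
      exact Finset.sum_comm)

lemma matAct_mul (a b : Matrix (Fin n) (Fin n) R) :
    matAct π (a * b) = matAct π a * matAct π b :=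
  map_mul (matActHom π) a b

lemma norm_matAct_le (a : Matrix (Fin n) (Fin n) R) :
    ‖matAct π a‖ ≤ ∑ i, ∑ j, ‖π (a i j)‖ := by
  refine ContinuousLinearMap.opNorm_le_bound _ (by positivity) fun v => ?_
  calc ‖matAct π a v‖ ≤ ∑ i, ‖matAct π a v i‖ := by
        rw [PiLp.norm_eq_of_L2]
        exact Real.sqrt_le_iff.2 ⟨by positivity,
          Finset.sum_sq_le_sq_sum_of_nonneg fun _ _ => norm_nonneg _⟩
    _ ≤ ∑ i, ∑ j, ‖π (a i j)‖ * ‖v‖ := by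
        gcongr with i
        rw [matAct_apply]
        refine norm_sum_le_of_le _ fun j _ => ?_
        exact (π (a i j)).le_opNorm_of_le (PiLp.norm_apply_le v j)
    _ = (∑ i, ∑ j, ‖π (a i j)‖) * ‖v‖ := by simp only [Finset.sum_mul]

end MatrixAction

section Representation

namespace GNSRep

variable {G : Type*} [Group G] {φ : G → ℂ} (R : GNSRep G φ) {n : ℕ}

lemma π_single (g : G) (c : ℂ) :
    R.π (MonoidAlgebra.single g c) = c • R.π (MonoidAlgebra.of ℂ G g) := by
  rw [← map_smul, MonoidAlgebra.smul_of]

lemma star_π (x : MonoidAlgebra ℂ G) : star (R.π x) = R.π (star x) := by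
  induction x using MonoidAlgebra.induction_linear with
  | zero => simp
  | add x y hx hy => simp [hx, hy]
  | single g c => rw [groupAlgebra_star_single, π_single, π_single, star_smul, R.star_of]

lemma star_matAct (a : Matrix (Fin n) (Fin n) (MonoidAlgebra ℂ G)) :
    star (matAct R.π a) = matAct R.π aᴴ := by
  symm
  rw [ContinuousLinearMap.star_eq_adjoint, ContinuousLinearMap.eq_adjoint_iff]
  intro x y
  simp only [PiLp.inner_apply, matAct_apply, sum_inner, inner_sum, Matrix.conjTranspose_apply,
    ← star_π, ContinuousLinearMap.star_eq_adjoint, ContinuousLinearMap.adjoint_inner_left]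
  exact Finset.sum_comm

lemma inner_ξ_π (x : MonoidAlgebra ℂ G) : inner ℂ R.ξ (R.π x R.ξ) = linExt φ x := by
  induction x using MonoidAlgebra.induction_linear with
  | zero => simp
  | add x y hx hy => simp [hx, hy]
  | single g c => rw [π_single, _root_.smul_apply, inner_smul_right, R.inner_eq, linExt_single]

lemma norm_π_of_le_one (g : G) : ‖R.π (MonoidAlgebra.of ℂ G g)‖ ≤ 1 := by
  set u := R.π (MonoidAlgebra.of ℂ G g) with hu
  have hstar : star u * u = 1 := by
    rw [hu, R.star_of, ← map_mul, ← map_mul, inv_mul_cancel, map_one, map_one]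
  have hnorm : ‖u‖ * ‖u‖ ≤ 1 := by
    rw [← CStarRing.norm_star_mul_self, hstar]
    exact ContinuousLinearMap.norm_id_le
  nlinarith [norm_nonneg u]

lemma exists_norm_π_le (x : MonoidAlgebra ℂ G) :
    ∃ C : ℝ, ∀ (φ : G → ℂ) (R : GNSRep G φ), ‖R.π x‖ ≤ C := by
  induction x using MonoidAlgebra.induction_linear with
  | zero => exact ⟨0, fun φ R => by simp⟩
  | add x y hx hy =>
    obtain ⟨C, hC⟩ := hx
    obtain ⟨D, hD⟩ := hy
    exact ⟨C + D, fun φ R => by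
      rw [map_add]
      exact norm_add_le_of_le (hC φ R) (hD φ R)⟩
  | single g c =>
    exact ⟨‖c‖, fun φ R => by
      rw [π_single, norm_smul]
      exact mul_le_of_le_one_right (norm_nonneg c) (R.norm_π_of_le_one g)⟩

lemma exists_norm_matAct_le (a : Matrix (Fin n) (Fin n) (MonoidAlgebra ℂ G)) :
    ∃ C : ℝ, ∀ (φ : G → ℂ) (R : GNSRep G φ), ‖matAct R.π a‖ ≤ C := by
  choose C hC using fun i j => exists_norm_π_le (a i j)
  exact ⟨∑ i, ∑ j, C i j, fun φ R => (norm_matAct_le R.π a).trans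
    (Finset.sum_le_sum fun i _ => Finset.sum_le_sum fun j _ => hC i j φ R)⟩

/-- The functional `φ ⊗ Trₙ` on the bounded operators on `Hⁿ`, or rather its real part. -/
def tr (n : ℕ) :
    (PiLp 2 (fun _ : Fin n => R.H) →L[ℂ] PiLp 2 (fun _ : Fin n => R.H)) →ₗ[ℝ] ℝ where
  toFun A := (∑ i, inner ℂ (R.vec i) (A (R.vec i))).re
  map_add' A B := by simp [Finset.sum_add_distrib]
  map_smul' c A := by simp [inner_smul_right_eq_smul, ← Finset.mul_sum]

lemma tr_apply (A : PiLp 2 (fun _ : Fin n => R.H) →L[ℂ] PiLp 2 (fun _ : Fin n => R.H)) :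
    R.tr n A = (∑ i, inner ℂ (R.vec i) (A (R.vec i))).re := rfl

lemma continuous_tr : Continuous (R.tr n) := by
  change Continuous fun A : PiLp 2 (fun _ : Fin n => R.H) →L[ℂ] PiLp 2 (fun _ : Fin n => R.H) =>
    (∑ i, inner ℂ (R.vec i) (A (R.vec i))).re
  fun_prop

lemma monotone_tr : Monotone (R.tr n) := by
  intro A B hAB
  rw [← sub_nonneg, ← map_sub, tr_apply, Complex.re_sum]
  exact Finset.sum_nonneg fun i _ =>
    ((ContinuousLinearMap.le_def _ _).1 hAB).re_inner_nonneg_right _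

lemma tr_matAct (a : Matrix (Fin n) (Fin n) (MonoidAlgebra ℂ G)) :
    R.tr n (matAct R.π a) = (linExt φ a.trace).re := by
  have hvec (i j : Fin n) : R.vec i j = if j = i then R.ξ else 0 := by
    by_cases h : j = i <;> simp [vec, h]
  have hdiag (i : Fin n) : inner ℂ (R.vec i) (matAct R.π a (R.vec i)) = linExt φ (a i i) := by
    rw [PiLp.inner_apply, Finset.sum_eq_single i (by simp +contextual [hvec]) (by simp)]
    simp [hvec, apply_ite, inner_ξ_π]
  simp [tr_apply, hdiag, Matrix.trace]

end GNSRep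

end Representation

section CStarAlgebra

open Set

variable {A : Type*} [CStarAlgebra A]

lemma cfc_cfcAbs (x : A) {h : ℝ → ℝ} (hh : ContinuousOn h (Ici 0)) :
    cfc h (cfcAbs x) = cfc (fun s => h √s) (star x * x) := by
  refine (cfc_comp' h Real.sqrt (star x * x) (hh.mono ?_)).symm
  rintro _ ⟨s, -, rfl⟩
  exact Real.sqrt_nonneg s

lemma spectrum_star_mul_self_subset_Icc [PartialOrder A] [StarOrderedRing A] (x : A) :
    spectrum ℝ (star x * x) ⊆ Icc 0 (‖x‖ ^ 2) := fun s hs => by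
  refine ⟨spectrum_nonneg_of_nonneg (star_mul_self_nonneg x) hs, ?_⟩
  have hle := (IsSelfAdjoint.star_mul_self x).le_algebraMap_norm_self
  rw [CStarRing.norm_star_mul_self, ← sq] at hle
  exact (le_algebraMap_iff_spectrum_le (IsSelfAdjoint.star_mul_self x)).1 hle s hs

end CStarAlgebra

lemma exists_polynomial_ge_tendstoUniformlyOn {f : ℝ → ℝ} (hf : ContinuousOn f (Set.Ici 0)) :
    ∃ p : ℕ → Polynomial ℝ, (∀ k : ℕ, ∀ s ∈ Set.Icc (0 : ℝ) k, f s ≤ (p k).eval s) ∧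
      ∀ B, TendstoUniformlyOn (fun k s => (p k).eval s) f atTop (Set.Icc 0 B) := by
  choose q hq using fun k : ℕ => exists_polynomial_near_of_continuousOn 0 k f
    (hf.mono Set.Icc_subset_Ici_self) (1 / (k + 1)) Nat.one_div_pos_of_nat
  refine ⟨fun k => q k + Polynomial.C (1 / (k + 1 : ℝ)), fun k s hs => ?_, fun B => ?_⟩
  · have := abs_lt.1 (hq k s hs)
    simp only [Polynomial.eval_add, Polynomial.eval_C]
    linarith
  · rw [Metric.tendstoUniformlyOn_iff]
    intro ε hε
    filter_upwards [tendsto_one_div_add_atTop_nhds_zero_nat.eventually_lt_const (half_pos hε),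
      eventually_ge_atTop ⌈B⌉₊] with k hkε hkB s hs
    have := abs_lt.1 (hq k s ⟨hs.1, hs.2.trans (Nat.ceil_le.1 hkB)⟩)
    rw [Real.dist_eq, abs_lt]
    simp only [Polynomial.eval_add, Polynomial.eval_C]
    constructor <;> linarith

section SpectralTrace

open Set

namespace GNSRep

variable {G : Type*} [Group G] {φ : G → ℂ} (R : GNSRep G φ) {n : ℕ}
  (a : Matrix (Fin n) (Fin n) (MonoidAlgebra ℂ G)) {f g : ℝ → ℝ}

/-- `(φ ⊗ Trₙ)(f(a* a))`, the integral of `f` against the spectral measure of `a* a`. It is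
evaluated only on functions that are continuous on `[0, ∞)`. -/
def spectralTrace (f : ℝ → ℝ) : ℝ :=
  R.tr n (cfc f (star (matAct R.π a) * matAct R.π a))

lemma spectrum_subset_Ici : spectrum ℝ (star (matAct R.π a) * matAct R.π a) ⊆ Ici 0 :=
  (spectrum_star_mul_self_subset_Icc _).trans Icc_subset_Ici_self

lemma spectralTrace_mono (hf : ContinuousOn f (Ici 0)) (hg : ContinuousOn g (Ici 0))
    (h : ∀ s ∈ Icc 0 (‖matAct R.π a‖ ^ 2), f s ≤ g s) :
    R.spectralTrace a f ≤ R.spectralTrace a g :=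
  R.monotone_tr (cfc_mono (fun s hs => h s (spectrum_star_mul_self_subset_Icc _ hs))
    (hf.mono (R.spectrum_subset_Ici a)) (hg.mono (R.spectrum_subset_Ici a)))

lemma spectralTrace_const (c : ℝ) : R.spectralTrace a (fun _ => c) = c * R.tr n 1 := by
  rw [spectralTrace, cfc_const _ _ (IsSelfAdjoint.star_mul_self _), Algebra.algebraMap_eq_smul_one,
    map_smul, smul_eq_mul]

lemma spectralTrace_add (hf : ContinuousOn f (Ici 0)) (hg : ContinuousOn g (Ici 0)) :
    R.spectralTrace a (fun s => f s + g s) = R.spectralTrace a f + R.spectralTrace a g := by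
  rw [spectralTrace, cfc_add _ _ _ (hf.mono (R.spectrum_subset_Ici a))
    (hg.mono (R.spectrum_subset_Ici a)), map_add]
  rfl

lemma spectralTrace_const_mul (c : ℝ) (hf : ContinuousOn f (Ici 0)) :
    R.spectralTrace a (fun s => c * f s) = c * R.spectralTrace a f := by
  rw [spectralTrace, cfc_const_mul _ _ _ (hf.mono (R.spectrum_subset_Ici a)), map_smul,
    smul_eq_mul]
  rfl

lemma spectralTrace_eval (p : Polynomial ℝ) :
    R.spectralTrace a (fun s => p.eval s) = (linExt φ (Polynomial.aeval (aᴴ * a) p).trace).re := by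
  rw [spectralTrace, cfc_polynomial p _ (IsSelfAdjoint.star_mul_self _), ← tr_matAct, star_matAct,
    ← matAct_mul]
  exact congrArg _ (Polynomial.aeval_algHom_apply ((matActHom R.π).restrictScalars ℝ) (aᴴ * a) p)

lemma spectralTrace_eval_eq_sum (p : Polynomial ℝ) :
    R.spectralTrace a (fun s => p.eval s) = ∑ k ∈ Finset.range (p.natDegree + 1),
      p.coeff k * (linExt φ ((aᴴ * a) ^ k).trace).re := by
  rw [spectralTrace_eval, Polynomial.aeval_eq_sum_range, Matrix.trace_sum, map_sum, Complex.re_sum]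
  refine Finset.sum_congr rfl fun k _ => ?_
  rw [Matrix.trace_smul, ← algebraMap_smul ℂ (p.coeff k), map_smul]
  simp

lemma tendsto_spectralTrace {ι : Type*} {l : Filter ι} {F : ι → ℝ → ℝ}
    (hF : ∀ i, ContinuousOn (F i) (Ici 0))
    (h : TendstoUniformlyOn F f l (Icc 0 (‖matAct R.π a‖ ^ 2))) :
    Tendsto (fun i => R.spectralTrace a (F i)) l (𝓝 (R.spectralTrace a f)) :=
  (R.continuous_tr.tendsto _).comp (tendsto_cfc_fun (h.mono (spectrum_star_mul_self_subset_Icc _))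
    (Eventually.of_forall fun i => (hF i).mono (R.spectrum_subset_Ici a)))

lemma spectralTrace_eq_sum {ι : Type*} [Fintype ι] {N : ℕ}
    (T : Matrix (Fin N) (Fin N) (MonoidAlgebra ℂ G))
    (b : ι → Matrix (Fin n) (Fin n) (MonoidAlgebra ℂ G))
    (hmom : ∀ k : ℕ, linExt φ ((Tᴴ * T) ^ k).trace = ∑ i, linExt φ (((b i)ᴴ * b i) ^ k).trace)
    (hf : ContinuousOn f (Ici 0)) : R.spectralTrace T f = ∑ i, R.spectralTrace (b i) f := by
  obtain ⟨p, -, hp⟩ := exists_polynomial_ge_tendstoUniformlyOn hf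
  have hpoly (k : ℕ) : R.spectralTrace T (fun s => (p k).eval s) =
      ∑ i, R.spectralTrace (b i) (fun s => (p k).eval s) := by
    simp_rw [spectralTrace_eval_eq_sum, hmom, Complex.re_sum, Finset.mul_sum]
    exact Finset.sum_comm
  have hcont (k : ℕ) : ContinuousOn (fun s => (p k).eval s) (Ici 0) :=
    (p k).continuous.continuousOn
  refine tendsto_nhds_unique (R.tendsto_spectralTrace T hcont (hp _)) ?_
  simp_rw [hpoly]
  exact tendsto_finsetSum _ fun i _ => R.tendsto_spectralTrace (b i) hcont (hp _)

lemma upperSemicontinuous_spectralTrace {X : Type*} [TopologicalSpace X] {φ : X → G → ℂ}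
    (hφ : Continuous φ) (R : ∀ x, GNSRep G (φ x)) (hf : ContinuousOn f (Ici 0)) :
    UpperSemicontinuous fun x => (R x).spectralTrace a f := by
  intro x y hy
  obtain ⟨p, hfp, hp⟩ := exists_polynomial_ge_tendstoUniformlyOn hf
  have hcont (k : ℕ) : ContinuousOn (fun s => (p k).eval s) (Ici 0) :=
    (p k).continuous.continuousOn
  obtain ⟨C, hC⟩ := exists_norm_matAct_le a
  obtain ⟨k, hky, hkC⟩ :=
    (((R x).tendsto_spectralTrace a hcont (hp _)).eventually_lt_const hy |>.and
      (eventually_ge_atTop ⌈C ^ 2⌉₊)).exists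
  have hpoly : Continuous fun x => (R x).spectralTrace a fun s => (p k).eval s := by
    simp_rw [spectralTrace_eval]
    exact Complex.continuous_re.comp ((continuous_linExt _).comp hφ)
  filter_upwards [hpoly.continuousAt.eventually_lt_const hky] with z hz
  refine ((R z).spectralTrace_mono a hf (hcont k) fun s hs => hfp k s ⟨hs.1, ?_⟩).trans_lt hz
  calc s ≤ ‖matAct (R z).π a‖ ^ 2 := hs.2
    _ ≤ C ^ 2 := by gcongr; exact hC _ _
    _ ≤ k := Nat.ceil_le.1 hkC

end GNSRep

end SpectralTrace

section KerDim

open Set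

/-- The functions competing in the infimum that defines `dim_φ(ker a)`. -/
def kerTests : Set (ℝ → ℝ) :=
  {f | ContinuousOn f (Ici 0) ∧ (∀ t ∈ Ici (0 : ℝ), f t ∈ Icc (0 : ℝ) 1) ∧ f 0 = 1}

/-- The resolvent functions `s ↦ (1 + k s)⁻¹`, which decrease to the indicator function of `{0}`
on `[0, ∞)` as `k → ∞`. -/
def resolventTest (k s : ℝ) : ℝ := (1 + k * s)⁻¹

lemma resolventTest_mem_kerTests {k : ℝ} (hk : 0 ≤ k) : resolventTest k ∈ kerTests := by
  have hpos : ∀ s ∈ Ici (0 : ℝ), 1 ≤ 1 + k * s := fun s hs =>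
    le_add_of_nonneg_right (mul_nonneg hk hs)
  refine ⟨ContinuousOn.inv₀ (by fun_prop) fun s hs => (zero_lt_one.trans_le (hpos s hs)).ne',
    fun s hs => ⟨inv_nonneg.2 (zero_le_one.trans (hpos s hs)), inv_le_one_of_one_le₀ (hpos s hs)⟩,
    ?_⟩
  simp [resolventTest]

lemma resolventTest_le {δ η k s : ℝ} (hδ : 0 < δ) (hη : 0 < η) (hk : (δ * η)⁻¹ ≤ k) (hs : δ ≤ s) :
    resolventTest k s ≤ η := by
  have hks : η⁻¹ ≤ k * s := calc
    η⁻¹ = (δ * η)⁻¹ * δ := by field_simp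
    _ ≤ k * s := by gcongr; exact (by positivity : (0 : ℝ) ≤ (δ * η)⁻¹).trans hk
  exact inv_le_of_inv_le₀ hη (by linarith)

lemma eventually_resolventTest_le_add {f : ℝ → ℝ} (hf : f ∈ kerTests) {η : ℝ} (hη : 0 < η) :
    ∀ᶠ k in atTop, ∀ s ∈ Ici (0 : ℝ), resolventTest k s ≤ f s + η := by
  obtain ⟨δ, hδ, hfδ⟩ := Metric.continuousWithinAt_iff.1 (hf.1 0 self_mem_Ici) η hη
  filter_upwards [eventually_ge_atTop (δ * η)⁻¹] with k hk s hs
  rcases lt_or_ge s δ with hsδ | hδs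
  · have hk0 : 0 ≤ k := (by positivity : (0 : ℝ) ≤ (δ * η)⁻¹).trans hk
    have hle := ((resolventTest_mem_kerTests hk0).2.1 s hs).2
    have hnear := hfδ hs (by rwa [Real.dist_0_eq_abs, abs_of_nonneg hs])
    rw [hf.2.2, Real.dist_eq, abs_lt] at hnear
    linarith
  · linarith [resolventTest_le hδ hη hk hδs, (hf.2.1 s hs).1]

namespace GNSRep

variable {G : Type*} [Group G] {φ : G → ℂ} (R : GNSRep G φ) {n : ℕ}
  (a : Matrix (Fin n) (Fin n) (MonoidAlgebra ℂ G))

lemma kerDim_eq : R.kerDim a = sInf (R.spectralTrace a '' kerTests) := by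
  rw [kerDim]
  congr 1
  ext r
  constructor
  · rintro ⟨h, hc, hmem, h0, rfl⟩
    refine ⟨fun s => h √s, ⟨hc.comp Real.continuous_sqrt.continuousOn fun s _ => Real.sqrt_nonneg s,
      fun s _ => hmem _ (Real.sqrt_nonneg s), by simpa only [Real.sqrt_zero]⟩, ?_⟩
    rw [cfc_cfcAbs _ hc, ← tr_apply]
    rfl
  · rintro ⟨f, ⟨hc, hmem, h0⟩, rfl⟩
    have hc_sq : ContinuousOn (fun t => f (t ^ 2)) (Ici 0) :=
      hc.comp (by fun_prop) fun t _ => sq_nonneg t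
    refine ⟨fun t => f (t ^ 2), hc_sq, fun t _ => hmem _ (sq_nonneg t), by simpa using h0, ?_⟩
    rw [cfc_cfcAbs _ hc_sq, ← tr_apply, spectralTrace]
    refine congrArg _ (cfc_congr fun s hs => ?_)
    rw [Real.sq_sqrt (R.spectrum_subset_Ici a hs)]

lemma kerDim_le {f : ℝ → ℝ} (hf : f ∈ kerTests) : R.kerDim a ≤ R.spectralTrace a f := by
  rw [kerDim_eq]
  refine csInf_le ⟨0, ?_⟩ (mem_image_of_mem _ hf)
  rintro _ ⟨g, hg, rfl⟩
  calc 0 = R.spectralTrace a fun _ => 0 := by rw [spectralTrace_const, zero_mul]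
    _ ≤ R.spectralTrace a g :=
      R.spectralTrace_mono a continuousOn_const hg.1 fun s hs => (hg.2.1 s hs.1).1

lemma exists_spectralTrace_lt {y : ℝ} (hy : R.kerDim a < y) :
    ∃ f ∈ kerTests, R.spectralTrace a f < y := by
  rw [kerDim_eq] at hy
  obtain ⟨_, ⟨f, hf, rfl⟩, hfy⟩ := exists_lt_of_csInf_lt
    ⟨_, mem_image_of_mem _ (resolventTest_mem_kerTests le_rfl)⟩ hy
  exact ⟨f, hf, hfy⟩

lemma tendsto_spectralTrace_resolventTest :
    Tendsto (fun k => R.spectralTrace a (resolventTest k)) atTop (𝓝 (R.kerDim a)) := by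
  refine tendsto_order.2 ⟨fun y hy => ?_, fun y hy => ?_⟩
  · filter_upwards [eventually_ge_atTop 0] with k hk
    exact hy.trans_le (R.kerDim_le a (resolventTest_mem_kerTests hk))
  · obtain ⟨f, hf, hfy⟩ := R.exists_spectralTrace_lt a hy
    obtain ⟨η, hη, hηy⟩ := exists_pos_mul_lt (sub_pos.2 hfy) (R.tr n 1)
    filter_upwards [eventually_resolventTest_le_add hf hη, eventually_ge_atTop 0] with k hk hk0
    calc R.spectralTrace a (resolventTest k) ≤ R.spectralTrace a (fun s => f s + η) :=
          R.spectralTrace_mono a (resolventTest_mem_kerTests hk0).1 (hf.1.add continuousOn_const)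
            fun s hs => hk s hs.1
      _ = R.spectralTrace a f + η * R.tr n 1 := by
          rw [R.spectralTrace_add a hf.1 continuousOn_const, spectralTrace_const]
      _ < y := by linarith

end GNSRep

end KerDim

section Resolvent

open Set

variable {A : Type*} [CStarAlgebra A] [PartialOrder A] [StarOrderedRing A] {x y : A} {k c : ℝ}

lemma continuousOn_resolventTest_spectrum (hx : 0 ≤ x) (hk : 0 ≤ k) :
    ContinuousOn (resolventTest k) (spectrum ℝ x) :=
  (resolventTest_mem_kerTests hk).1.mono fun _ hs => spectrum_nonneg_of_nonneg hx hs

lemma cfc_resolventTest_mul (hx : 0 ≤ x) (hk : 0 ≤ k) (hc : 0 ≤ c) :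
    cfc (resolventTest (k * c)) x = cfc (resolventTest k) (c • x) := by
  have hcont : ContinuousOn (resolventTest k) ((c • ·) '' spectrum ℝ x) := by
    refine (resolventTest_mem_kerTests hk).1.mono ?_
    rintro _ ⟨s, hs, rfl⟩
    exact mul_nonneg hc (spectrum_nonneg_of_nonneg hx hs)
  have hscale : resolventTest (k * c) = fun s => resolventTest k (c • s) := by
    funext s
    rw [resolventTest, resolventTest, smul_eq_mul, mul_assoc]
  rw [← cfc_comp_smul c (resolventTest k) x hcont (.of_nonneg hx), hscale]

lemma cfc_resolventTest_one (hx : 0 ≤ x) :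
    cfc (resolventTest 1) x = 1 - cfcₙ (fun s : ℝ => 1 - (1 + s)⁻¹) x := by
  have hsub : (fun s : ℝ => 1 - (1 + s)⁻¹) = fun s => 1 - resolventTest 1 s := by
    simp only [resolventTest, one_mul]
  have hcont : ContinuousOn (fun s : ℝ => 1 - resolventTest 1 s) (quasispectrum ℝ x) :=
    continuousOn_const.sub ((resolventTest_mem_kerTests zero_le_one).1.mono
      fun s hs => quasispectrum_nonneg_of_nonneg x hx s hs)
  rw [hsub, cfcₙ_eq_cfc hcont (by simp [resolventTest]), cfc_sub _ _ x continuousOn_const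
    (continuousOn_resolventTest_spectrum hx zero_le_one), cfc_const_one ℝ x (.of_nonneg hx),
    sub_sub_cancel]

lemma cfc_resolventTest_anti (hx : 0 ≤ x) (hxy : x ≤ y) (hk : 0 ≤ k) :
    cfc (resolventTest k) y ≤ cfc (resolventTest k) x := by
  have hy : 0 ≤ y := hx.trans hxy
  rw [← one_mul k, cfc_resolventTest_mul hx zero_le_one hk, cfc_resolventTest_mul hy zero_le_one hk,
    cfc_resolventTest_one (smul_nonneg hk hx), cfc_resolventTest_one (smul_nonneg hk hy)]
  exact sub_le_sub_left (CFC.monotoneOn_one_sub_one_add_inv_real (smul_nonneg hk hx)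
    (smul_nonneg hk hy) (smul_le_smul_of_nonneg_left hxy hk)) 1

lemma star_mul_self_mul_le (x y : A) :
    star (x * y) * (x * y) ≤ ‖star x * x‖ • (star y * y) := by
  have hassoc : star (x * y) * (x * y) = star y * (star x * x) * y := by
    simp only [star_mul, mul_assoc]
  rw [hassoc]
  exact CStarAlgebra.star_left_conjugate_le_norm_smul (hb := .star_mul_self x)

end Resolvent

section KerDim

namespace GNSRep

variable {G : Type*} [Group G] {φ : G → ℂ} (R : GNSRep G φ) {n : ℕ}
  (a : Matrix (Fin n) (Fin n) (MonoidAlgebra ℂ G))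

lemma kerDim_eq_sum {ι : Type*} [Fintype ι] {N : ℕ}
    (T : Matrix (Fin N) (Fin N) (MonoidAlgebra ℂ G))
    (b : ι → Matrix (Fin n) (Fin n) (MonoidAlgebra ℂ G))
    (hmom : ∀ k : ℕ, linExt φ ((Tᴴ * T) ^ k).trace = ∑ i, linExt φ (((b i)ᴴ * b i) ^ k).trace) :
    R.kerDim T = ∑ i, R.kerDim (b i) := by
  refine tendsto_nhds_unique (R.tendsto_spectralTrace_resolventTest T)
    ((tendsto_finsetSum _ fun i _ => R.tendsto_spectralTrace_resolventTest (b i)).congr' ?_)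
  filter_upwards [eventually_ge_atTop 0] with k hk
  exact (R.spectralTrace_eq_sum T b hmom (resolventTest_mem_kerTests hk).1).symm

lemma kerDim_conjTranspose (hφ : IsGroupTrace φ) : R.kerDim aᴴ = R.kerDim a := by
  have hsum := R.kerDim_eq_sum aᴴ (fun _ : Unit => a) fun k => by
    rw [conjTranspose_conjTranspose, hφ.linExt_trace_mul_pow_comm, Fintype.sum_unique]
  rwa [Fintype.sum_unique] at hsum

lemma kerDim_le_kerDim_mul (s : Matrix (Fin n) (Fin n) (MonoidAlgebra ℂ G)) :
    R.kerDim a ≤ R.kerDim (s * a) := by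
  set S := matAct R.π s
  set T := matAct R.π a
  set c : ℝ := ‖star S * S‖ + 1
  have hc : 0 < c := by positivity
  have hT : 0 ≤ star T * T := star_mul_self_nonneg T
  have hle : star (S * T) * (S * T) ≤ c • (star T * T) := (star_mul_self_mul_le S T).trans
    (smul_le_smul_of_nonneg_right (le_add_of_nonneg_right zero_le_one) hT)
  refine le_of_tendsto_of_tendsto
    ((R.tendsto_spectralTrace_resolventTest a).comp (tendsto_id.atTop_mul_const hc))
    (R.tendsto_spectralTrace_resolventTest (s * a)) ?_
  filter_upwards [eventually_ge_atTop 0] with k hk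
  have hcfc : cfc (resolventTest (k * c)) (star T * T) ≤
      cfc (resolventTest k) (star (S * T) * (S * T)) := by
    rw [cfc_resolventTest_mul hT hk hc.le]
    exact cfc_resolventTest_anti (star_mul_self_nonneg _) hle hk
  rw [← matAct_mul] at hcfc
  exact R.monotone_tr hcfc

lemma kerDim_mul_of_isUnit_left {s : Matrix (Fin n) (Fin n) (MonoidAlgebra ℂ G)} (hs : IsUnit s) :
    R.kerDim (s * a) = R.kerDim a := by
  obtain ⟨u, rfl⟩ := hs
  refine le_antisymm ?_ (R.kerDim_le_kerDim_mul a u)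
  have hle := R.kerDim_le_kerDim_mul (u.val * a) u⁻¹.val
  rwa [u.inv_mul_cancel_left] at hle

lemma kerDim_mul_of_isUnit_right (hφ : IsGroupTrace φ)
    {s : Matrix (Fin n) (Fin n) (MonoidAlgebra ℂ G)} (hs : IsUnit s) :
    R.kerDim (a * s) = R.kerDim a := by
  rw [← R.kerDim_conjTranspose (a * s) hφ, conjTranspose_mul, ← star_eq_conjTranspose s,
    R.kerDim_mul_of_isUnit_left _ hs.star, R.kerDim_conjTranspose a hφ]

lemma kerDim_reindex_blockDiagonal {ι : Type*} [Fintype ι] [DecidableEq ι] {N : ℕ}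
    (e : Fin n × ι ≃ Fin N) (b : ι → Matrix (Fin n) (Fin n) (MonoidAlgebra ℂ G)) :
    R.kerDim (reindexAlgEquiv ℂ (MonoidAlgebra ℂ G) e (blockDiagonal b)) =
      ∑ i, R.kerDim (b i) := by
  refine R.kerDim_eq_sum _ b fun k => ?_
  have hstar : (reindexAlgEquiv ℂ (MonoidAlgebra ℂ G) e (blockDiagonal b))ᴴ =
      reindexAlgEquiv ℂ (MonoidAlgebra ℂ G) e (blockDiagonal fun i => (b i)ᴴ) := by
    rw [← blockDiagonal_conjTranspose]
    rfl
  have htrace (M : Matrix (Fin n × ι) (Fin n × ι) (MonoidAlgebra ℂ G)) :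
      (reindexAlgEquiv ℂ (MonoidAlgebra ℂ G) e M).trace = M.trace :=
    e.symm.sum_comp M.diag
  rw [hstar, ← map_mul, ← map_pow, htrace, ← blockDiagonal_mul, ← blockDiagonal_pow,
    trace_blockDiagonal, map_sum]
  rfl

lemma kerDim_smul {c : ℂ} (hc : c ≠ 0) : R.kerDim (c • a) = R.kerDim a := by
  rw [Algebra.smul_def]
  exact R.kerDim_mul_of_isUnit_left a ((IsUnit.mk0 c hc).map (algebraMap ℂ _))

end GNSRep

end KerDim

section Lueck

open Set

/-- The truncated logarithm `s ↦ ln (max s e⁻ᶜ)`. -/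
def truncLog (c s : ℝ) : ℝ := Real.log (max s (Real.exp (-c)))

lemma continuous_truncLog (c : ℝ) : Continuous (truncLog c) :=
  Continuous.log (by fun_prop) fun _ => (lt_max_of_lt_right (Real.exp_pos _)).ne'

lemma truncLog_zero (c : ℝ) : truncLog c 0 = -c := by
  rw [truncLog, max_eq_right (Real.exp_pos _).le, Real.log_exp]

lemma neg_le_truncLog (c s : ℝ) : -c ≤ truncLog c s :=
  (Real.le_log_iff_exp_le (lt_max_of_lt_right (Real.exp_pos _))).2 (le_max_right _ _)

lemma truncLog_le_log_max_one {c s B : ℝ} (hc : 0 ≤ c) (hs : s ≤ B) :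
    truncLog c s ≤ Real.log (max B 1) :=
  Real.log_le_log (lt_max_of_lt_right (Real.exp_pos _))
    (max_le_max hs (Real.exp_le_one_iff.2 (neg_nonpos.2 hc)))

lemma log_le_truncLog_add {c s : ℝ} {f : ℝ → ℝ} (hc : 0 ≤ c) (hf : f ∈ kerTests) (hs : 0 ≤ s) :
    Real.log s ≤ truncLog c s + c * f s := by
  rcases hs.eq_or_lt with rfl | hpos
  · rw [Real.log_zero, truncLog_zero, hf.2.2, mul_one, neg_add_cancel]
  · exact (Real.log_le_log hpos (le_max_left _ _)).trans
      (le_add_of_nonneg_right (mul_nonneg hc (hf.2.1 s hs).1))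

lemma max_neg_truncLog_div_mem_kerTests {c : ℝ} (hc : 0 < c) :
    (fun s => max (-truncLog c s / c) 0) ∈ kerTests := by
  refine ⟨(((continuous_truncLog c).neg.div_const c).max continuous_const).continuousOn,
    fun s _ => ⟨le_max_right _ _, max_le ?_ zero_le_one⟩, ?_⟩
  · rw [div_le_one hc]
    exact neg_le.1 (neg_le_truncLog c s)
  · beta_reduce
    rw [truncLog_zero, neg_neg, div_self hc.ne', max_eq_left zero_le_one]

variable {G : Type*} [Group G] {φ : G → ℂ} {n : ℕ}
  {a : Matrix (Fin n) (Fin n) (MonoidAlgebra ℂ G)}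

lemma SatisfiesLueck.spectralTrace_nonneg (hφ : SatisfiesLueck φ) (R : GNSRep G φ)
    (ha : ∀ (i j : Fin n) (g : G), ∃ m : ℤ, (a i j).coeff g = m) {f : ℝ → ℝ}
    (hf : ContinuousOn f (Ici 0)) (hlog : ∀ s ∈ Ici (0 : ℝ), Real.log s ≤ f s) :
    0 ≤ R.spectralTrace a f := by
  rcases n.eq_zero_or_pos with rfl | hn
  · rw [GNSRep.spectralTrace, GNSRep.tr_apply, Fin.sum_univ_zero, Complex.zero_re]
  -- `ln t = ½ ln t²` turns a majorant in `s = t²` into one in `t`.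
  have hmaj : (fun t => 2⁻¹ * f (t ^ 2)) ∈ lnPlusMajorants := by
    refine ⟨continuousOn_const.mul (hf.comp (by fun_prop) fun t _ => sq_nonneg t), fun t _ => ?_⟩
    have hsq := hlog (t ^ 2) (sq_nonneg t)
    rw [Real.log_pow, Nat.cast_two] at hsq
    linarith
  have hcfc : cfc (fun t => 2⁻¹ * f (t ^ 2)) (cfcAbs (matAct R.π a)) =
      cfc (fun s => 2⁻¹ * f s) (star (matAct R.π a) * matAct R.π a) := by
    rw [cfc_cfcAbs _ hmaj.1]
    refine cfc_congr fun s hs => ?_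
    rw [Real.sq_sqrt (R.spectrum_subset_Ici a hs)]
  have hQ := (hφ n hn a ha R).trans (iInf₂_le _ hmaj)
  rw [hcfc, ← GNSRep.tr_apply, EReal.coe_nonneg, ← GNSRep.spectralTrace,
    R.spectralTrace_const_mul a _ hf] at hQ
  exact nonneg_of_mul_nonneg_right hQ (by norm_num)

lemma SatisfiesLueck.neg_spectralTrace_truncLog_le (hφ : SatisfiesLueck φ) (R : GNSRep G φ)
    (ha : ∀ (i j : Fin n) (g : G), ∃ m : ℤ, (a i j).coeff g = m) {c : ℝ} (hc : 0 < c) :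
    -R.spectralTrace a (truncLog c) ≤ c * R.kerDim a := by
  refine le_of_forall_gt_imp_ge_of_dense fun y hy => ?_
  obtain ⟨f, hf, hfy⟩ := R.exists_spectralTrace_lt a ((lt_div_iff₀' hc).2 hy)
  have hcf : ContinuousOn (fun s => c * f s) (Ici 0) := continuousOn_const.mul hf.1
  have hlog := (continuous_truncLog c).continuousOn (s := Ici 0)
  have hnonneg : 0 ≤ R.spectralTrace a fun s => truncLog c s + c * f s :=
    hφ.spectralTrace_nonneg R ha (hlog.add hcf) fun s hs => log_le_truncLog_add hc.le hf hs
  rw [R.spectralTrace_add a hlog hcf, R.spectralTrace_const_mul a c hf.1] at hnonneg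
  rw [lt_div_iff₀' hc] at hfy
  linarith

namespace GNSRep

lemma mul_kerDim_le (R : GNSRep G φ) (a : Matrix (Fin n) (Fin n) (MonoidAlgebra ℂ G)) {c : ℝ}
    (hc : 0 < c) : c * R.kerDim a ≤
      -R.spectralTrace a (truncLog c) + Real.log (max (‖matAct R.π a‖ ^ 2) 1) * R.tr n 1 := by
  set L : ℝ := Real.log (max (‖matAct R.π a‖ ^ 2) 1)
  have hL : 0 ≤ L := Real.log_nonneg (le_max_right _ _)
  have htest := max_neg_truncLog_div_mem_kerTests hc
  have hlog : ContinuousOn (fun s => -1 * truncLog c s) (Ici 0) :=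
    (continuous_const.mul (continuous_truncLog c)).continuousOn
  calc c * R.kerDim a ≤ c * R.spectralTrace a fun s => max (-truncLog c s / c) 0 := by
        gcongr
        exact R.kerDim_le a htest
    _ = R.spectralTrace a fun s => c * max (-truncLog c s / c) 0 :=
        (R.spectralTrace_const_mul a c htest.1).symm
    _ ≤ R.spectralTrace a fun s => -1 * truncLog c s + L := by
        refine R.spectralTrace_mono a (continuousOn_const.mul htest.1)
          (hlog.add continuousOn_const) fun s hs => ?_
        have hsL : truncLog c s ≤ L := truncLog_le_log_max_one hc.le hs.2
        rw [mul_max_of_nonneg _ _ hc.le, mul_div_cancel₀ _ hc.ne', mul_zero]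
        exact max_le (by linarith) (by linarith)
    _ = -R.spectralTrace a (truncLog c) + L * R.tr n 1 := by
        rw [R.spectralTrace_add a hlog continuousOn_const, spectralTrace_const,
          R.spectralTrace_const_mul a _ (continuous_truncLog c).continuousOn, neg_one_mul]

end GNSRep

end Lueck

section Semicontinuity

open Set

variable {G : Type*} [Group G] {X : Type*} [TopologicalSpace X] {φ : X → G → ℂ} {n : ℕ}
  (a : Matrix (Fin n) (Fin n) (MonoidAlgebra ℂ G))

namespace GNSRep

lemma upperSemicontinuous_kerDim (hφ : Continuous φ) (R : ∀ x, GNSRep G (φ x)) :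
    UpperSemicontinuous fun x => (R x).kerDim a := by
  intro x y hy
  obtain ⟨f, hf, hfy⟩ := (R x).exists_spectralTrace_lt a hy
  filter_upwards [upperSemicontinuous_spectralTrace a hφ R hf.1 x y hfy] with z hz
  exact ((R z).kerDim_le a hf).trans_lt hz

variable {a} in
lemma lowerSemicontinuous_kerDim (hφ : Continuous φ) (hLueck : ∀ x, SatisfiesLueck (φ x))
    (R : ∀ x, GNSRep G (φ x)) (ha : ∀ (i j : Fin n) (g : G), ∃ m : ℤ, (a i j).coeff g = m) :
    LowerSemicontinuous fun x => (R x).kerDim a := by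
  intro x y hy
  set E : ℝ := Real.log (max (‖matAct (R x).π a‖ ^ 2) 1) * (R x).tr n 1
  obtain ⟨c, hc, hEc⟩ : ∃ c > 0, E < c * ((R x).kerDim a - y) :=
    ((eventually_gt_atTop 0).and ((tendsto_id.atTop_mul_const
      (sub_pos.2 hy)).eventually_gt_atTop E)).exists
  have hlt : (R x).spectralTrace a (truncLog c) < -(c * y) := by
    linarith [(R x).mul_kerDim_le a hc]
  filter_upwards [upperSemicontinuous_spectralTrace a hφ R (continuous_truncLog c).continuousOn
    x _ hlt] with z hz
  have hle := (hLueck z).neg_spectralTrace_truncLog_le (R z) ha hc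
  exact lt_of_mul_lt_mul_left (by linarith) hc.le

end GNSRep

lemma continuous_of_continuous_sum {ι : Type*} [Fintype ι] {f : ι → X → ℝ}
    (hf : ∀ i, UpperSemicontinuous (f i)) (hsum : Continuous fun x => ∑ i, f i x) (i : ι) :
    Continuous (f i) := by
  classical
  have hrest : UpperSemicontinuous fun x => ∑ j ∈ Finset.univ.erase i, f j x :=
    upperSemicontinuous_sum fun j _ => hf j
  have hsub : f i = fun x => ∑ j, f j x + -∑ j ∈ Finset.univ.erase i, f j x := by
    funext x
    rw [← Finset.add_sum_erase _ _ (Finset.mem_univ i), add_neg_cancel_right]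
  refine continuous_iff_lower_upperSemicontinuous.2 ⟨?_, hf i⟩
  rw [hsub]
  exact hsum.lowerSemicontinuous.add hrest.neg

end Semicontinuity

section RestrictionOfScalars

open scoped Kronecker

lemma sum_map_mul_leftMulMatrix {O A ι : Type*} [CommRing O] [CommRing A] [Fintype ι]
    [DecidableEq ι] (ω : Module.Basis ι ℤ O) (f : O →+* A) (x : O) (j : ι) :
    ∑ k, f (ω k) * (Algebra.leftMulMatrix ω x k j : A) = f x * f (ω j) := by
  rw [← map_mul, ← ω.sum_repr (x * ω j), map_sum]
  refine Finset.sum_congr rfl fun k _ => ?_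
  rw [Algebra.leftMulMatrix_eq_repr_mul, map_zsmul, zsmul_eq_mul, mul_comm]

variable {G O ι : Type*} [CommRing O] [Fintype ι] [DecidableEq ι] {n : ℕ}
  (ω : Module.Basis ι ℤ O) (a : Matrix (Fin n) (Fin n) (MonoidAlgebra O G))

/-- Restriction of scalars of a matrix over `OG` to the integral group ring, with `O` acting on
itself by multiplication in the coordinates of a `ℤ`-basis; the result is viewed over `ℂG`. -/
def restrictScalarsMatrix : Matrix (Fin n × ι) (Fin n × ι) (MonoidAlgebra ℂ G) :=
  of fun x y => MonoidAlgebra.map ((Int.castAddHom ℂ).comp ((entryAddMonoidHom ℤ x.2 y.2).comp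
    (Algebra.leftMulMatrix ω : O →+ Matrix ι ι ℤ))) (a x.1 y.1)

lemma coeff_restrictScalarsMatrix (x y : Fin n × ι) (g : G) :
    (restrictScalarsMatrix ω a x y).coeff g =
      Algebra.leftMulMatrix ω ((a x.1 y.1).coeff g) x.2 y.2 := by
  simp [restrictScalarsMatrix]

variable [Group G]

lemma kronecker_mul_restrictScalarsMatrix (f : ι → O →+* ℂ) :
    ((1 : Matrix (Fin n) (Fin n) ℂ) ⊗ₖ of fun i j => f i (ω j)).map
        (algebraMap ℂ (MonoidAlgebra ℂ G)) * restrictScalarsMatrix ω a =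
      blockDiagonal (fun i => a.map (MonoidAlgebra.mapRingHom G (f i))) *
        ((1 : Matrix (Fin n) (Fin n) ℂ) ⊗ₖ of fun i j => f i (ω j)).map
          (algebraMap ℂ (MonoidAlgebra ℂ G)) := by
  ext ⟨u, i⟩ ⟨v, j⟩ g
  simp [Matrix.mul_apply, Fintype.sum_prod_type, one_apply, blockDiagonal_apply, apply_ite,
    coeff_restrictScalarsMatrix, sum_map_mul_leftMulMatrix]

lemma isUnit_map_one_kronecker {V : Matrix ι ι ℂ} (hV : IsUnit V) :
    IsUnit (((1 : Matrix (Fin n) (Fin n) ℂ) ⊗ₖ V).map (algebraMap ℂ (MonoidAlgebra ℂ G))) := by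
  refine IsUnit.map (algebraMap ℂ (MonoidAlgebra ℂ G)).mapMatrix ?_
  rw [isUnit_iff_isUnit_det, det_kronecker, det_one, one_pow, one_mul]
  exact ((isUnit_iff_isUnit_det V).1 hV).pow _

lemma GNSRep.kerDim_reindex_restrictScalarsMatrix {φ : G → ℂ} (R : GNSRep G φ)
    (hφ : IsGroupTrace φ) {f : ι → O →+* ℂ} (hf : IsUnit (of fun i j => f i (ω j)))
    {N : ℕ} (e : Fin n × ι ≃ Fin N) :
    R.kerDim (reindexAlgEquiv ℂ (MonoidAlgebra ℂ G) e (restrictScalarsMatrix ω a)) =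
      ∑ i, R.kerDim (a.map (MonoidAlgebra.mapRingHom G (f i))) := by
  have hU := (isUnit_map_one_kronecker (G := G) (n := n) hf).map
    (reindexAlgEquiv ℂ (MonoidAlgebra ℂ G) e)
  rw [← R.kerDim_reindex_blockDiagonal e, ← R.kerDim_mul_of_isUnit_left _ hU, ← map_mul,
    kronecker_mul_restrictScalarsMatrix, map_mul, R.kerDim_mul_of_isUnit_right _ hφ hU]

lemma continuous_kerDim_map_mapRingHom {X : Type*} [TopologicalSpace X] {φ : X → G → ℂ}
    (hφ : Continuous φ) (htrace : ∀ x, IsGroupTrace (φ x)) (hLueck : ∀ x, SatisfiesLueck (φ x))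
    (R : ∀ x, GNSRep G (φ x)) {f : ι → O →+* ℂ} (hf : IsUnit (of fun i j => f i (ω j))) (i : ι) :
    Continuous fun x => (R x).kerDim (a.map (MonoidAlgebra.mapRingHom G (f i))) := by
  let e := Fintype.equivFin (Fin n × ι)
  let T := reindexAlgEquiv ℂ (MonoidAlgebra ℂ G) e (restrictScalarsMatrix ω a)
  have hint (x y : Fin _) (g : G) : ∃ m : ℤ, (T x y).coeff g = m :=
    ⟨_, coeff_restrictScalarsMatrix ω a (e.symm x) (e.symm y) g⟩
  have hT : Continuous fun x => (R x).kerDim T := continuous_iff_lower_upperSemicontinuous.2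
    ⟨GNSRep.lowerSemicontinuous_kerDim hφ hLueck R hint, GNSRep.upperSemicontinuous_kerDim T hφ R⟩
  exact continuous_of_continuous_sum (fun i => GNSRep.upperSemicontinuous_kerDim _ hφ R)
    (hT.congr fun x => (R x).kerDim_reindex_restrictScalarsMatrix ω a (htrace x) hf e) i

end RestrictionOfScalars

section NumberField

open NumberField

lemma isUnit_of_embedding_reindex_basis (K : Type*) [Field K] [NumberField K]
    [DecidableEq (K →+* ℂ)] :
    IsUnit (of fun σ τ : K →+* ℂ => σ.comp (algebraMap (𝓞 K) K)
      ((RingOfIntegers.basis K).reindex (equivReindex K).symm τ)) := by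
  have hbasis : of (fun σ τ : K →+* ℂ => σ.comp (algebraMap (𝓞 K) K)
      ((RingOfIntegers.basis K).reindex (equivReindex K).symm τ)) = (basisMatrix K)ᵀ := by
    ext σ τ
    simp [canonicalEmbedding.latticeBasis_apply, integralBasis_apply]
  rw [hbasis, isUnit_iff_isUnit_det, det_transpose]
  exact (det_of_basisMatrix_non_zero K).isUnit

lemma exists_numberField_forall_exists_eq_mul {S : Set ℂ} (hS : S.Finite)
    (halg : ∀ c ∈ S, IsAlgebraic ℚ c) :
    ∃ K : IntermediateField ℚ ℂ, NumberField K ∧ ∃ m : ℤ, m ≠ 0 ∧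
      ∀ c ∈ S, ∃ x : 𝓞 K, algebraMap K ℂ x = m * c := by
  have := hS.to_subtype
  let K := IntermediateField.adjoin ℚ S
  have hfin : FiniteDimensional ℚ K :=
    IntermediateField.finiteDimensional_adjoin fun c hc => (halg c hc).isIntegral
  have hK : NumberField K := ⟨⟩
  have hpre : ((algebraMap K ℂ) ⁻¹' S).Finite := hS.preimage (algebraMap K ℂ).injective.injOn
  have hZ : Algebra.IsAlgebraic ℤ K :=
    (IsFractionRing.comap_isAlgebraic_iff (K := ℚ)).2 inferInstance
  obtain ⟨m, hm, hint⟩ := Algebra.IsAlgebraic.exists_integral_multiples ℤ hpre.toFinset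
  refine ⟨K, hK, m, hm, fun c hc => ?_⟩
  let y : K := ⟨c, IntermediateField.subset_adjoin ℚ S hc⟩
  have hy : y ∈ hpre.toFinset := hpre.mem_toFinset.2 hc
  exact ⟨⟨m • y, hint y hy⟩, by simp [y]⟩

lemma exists_map_mapRingHom_eq_smul {G : Type*} [Monoid G] {n : ℕ}
    {a : Matrix (Fin n) (Fin n) (MonoidAlgebra ℂ G)}
    (halg : ∀ (i j : Fin n) (g : G), IsAlgebraic ℚ ((a i j).coeff g)) :
    ∃ K : IntermediateField ℚ ℂ, NumberField K ∧ ∃ m : ℤ, m ≠ 0 ∧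
      ∃ b : Matrix (Fin n) (Fin n) (MonoidAlgebra (𝓞 K) G),
        b.map (MonoidAlgebra.mapRingHom G ((algebraMap K ℂ).comp (algebraMap (𝓞 K) K))) =
          (m : ℂ) • a := by
  let S : Set ℂ := ⋃ i, ⋃ j, Set.range (a i j).coeff
  have hS : S.Finite := Set.finite_iUnion fun i => Set.finite_iUnion fun j =>
    (a i j).coeff.finite_range
  obtain ⟨K, hK, m, hm, hint⟩ := exists_numberField_forall_exists_eq_mul hS (by
    simp only [S, Set.mem_iUnion, Set.mem_range]
    rintro _ ⟨i, j, g, rfl⟩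
    exact halg i j g)
  have hrange (i j : Fin n) : (m : ℂ) • a i j ∈ Set.range
      (MonoidAlgebra.map ((algebraMap K ℂ).comp (algebraMap (𝓞 K) K) : 𝓞 K →+ ℂ)) := by
    rw [MonoidAlgebra.range_map]
    intro g
    exact hint _ (Set.mem_iUnion₂.2 ⟨i, j, g, rfl⟩)
  choose b hb using hrange
  exact ⟨K, hK, m, hm, of b, Matrix.ext hb⟩

end NumberField

theorem stmt16_general {G : Type} [Group G] {n : ℕ}
    (a : Matrix (Fin n) (Fin n) (MonoidAlgebra ℂ G))
    (halg : ∀ (i j : Fin n) (g : G), IsAlgebraic ℚ ((a i j).coeff g)) {S : Set (G → ℂ)}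
    (hS : ∀ φ ∈ S, IsGroupTrace φ ∧ SatisfiesLueck φ) (D : (G → ℂ) → ℝ)
    (hD : ∀ φ ∈ S, ∀ R : GNSRep G φ, D φ = R.kerDim a) : ContinuousOn D S := by
  classical
  obtain ⟨K, hK, m, hm, b, hb⟩ := exists_map_mapRingHom_eq_smul halg
  let R (φ : S) : GNSRep G φ.1 := (hS φ.1 φ.2).1.1.nonempty_gnsRep.some
  have hcont := continuous_kerDim_map_mapRingHom _ b continuous_subtype_val
    (fun φ => (hS φ.1 φ.2).1) (fun φ => (hS φ.1 φ.2).2) R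
    (isUnit_of_embedding_reindex_basis K) (algebraMap K ℂ)
  rw [continuousOn_iff_continuous_domRestrict]
  refine hcont.congr fun φ => ?_
  rw [hb, GNSRep.kerDim_smul _ _ (Int.cast_ne_zero.2 hm)]
  exact (hD φ.1 φ.2 (R φ)).symm

/-- for `a ∈ Mₙ(ℚ̄ F_∞)` (all coefficients algebraic), the map
`φ ↦ dim_φ(ker a)` is continuous on the set of tracial states on `F_∞` satisfying Lück's
condition, for the topology of pointwise convergence.  (Formally: any function `D` which
computes `dim_φ(ker a)` in some/any GNS representation of each such `φ` is continuous on
this set.) -/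
theorem stmt16 (n : ℕ) (hn : 0 < n)
    (a : Matrix (Fin n) (Fin n) (MonoidAlgebra ℂ (FreeGroup ℕ)))
    (halg : ∀ (i j : Fin n) (g : FreeGroup ℕ), IsAlgebraic ℚ ((a i j).coeff g))
    (D : (FreeGroup ℕ → ℂ) → ℝ)
    (hD : ∀ φ ∈ {φ : FreeGroup ℕ → ℂ | IsGroupTrace φ ∧ φ 1 = 1 ∧ SatisfiesLueck φ},
      ∀ R : GNSRep (FreeGroup ℕ) φ, D φ = R.kerDim a) :
    ContinuousOn D {φ : FreeGroup ℕ → ℂ | IsGroupTrace φ ∧ φ 1 = 1 ∧ SatisfiesLueck φ} :=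
  stmt16_general a halg (fun _ hφ => ⟨hφ.1, hφ.2.2⟩) D hD

end
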